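/- arXiv:1807.02661 — 2 statements merged into one kernel-verified Lean document; each statement's English description precedes it below -/
import Mathlib

section
/- Let f(V) = √(V² + 1) − 1/2. Then f is even, positive, continuously differentiable, and strictly convex; it satisfies L = lim_{V→∞} f'(V) = 1, M = lim_{V→∞} (f(2V) − 2f(V)) = 1/2, the unique V̄ with f'(V̄) = 1/2 is V̄ = 1/√3, and 2f(0) − 2f(1/√3) + (1/√3)·1 − 1/2 = 3/2 − √3 < 0. Consequently, for this density the set {V₁ > 0 : there exists V₂ ≥ V₁ with μ(V₁, V₂) < 0} is nonempty and bounded above, i.e. the blowup time V₀ satisfies 0 < V₀ < ∞. -/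
open Filter Set Real

/-- The density f(V) = √(V² + 1) − 1/2. -/
noncomputable def fEx18 (V : ℝ) : ℝ := Real.sqrt (V ^ 2 + 1) - 1 / 2

/-- The perimeter difference μ(V₁,V₂) between the triple interval and the double
interval, expressed via the equilibrium point Ṽ = Vt V₁ V₂. -/
noncomputable def mu (f : ℝ → ℝ) (Vt : ℝ → ℝ → ℝ) (V₁ V₂ : ℝ) : ℝ :=
  2 * f (V₁ / 2) + 2 * f ((V₁ + V₂) / 2)
    - f (Vt V₁ V₂) - f (Vt V₁ V₂ + V₁) - f (Vt V₁ V₂ + V₁ + V₂)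

/-!
At an equilibrium point the perimeter of the triple interval is minimal among translates, because
it is convex in the translation; comparing with the translate `-V₁` bounds `mu f Vt V₁ V₂` from
below, and with an asymptote `L * V - M` this bound is `L * V₁` minus a constant. Conversely, the
tangent of slope `-L / 2` at `-v` and the asymptote bound every triple interval from below, so that
letting `V₂ → ∞` and then `V₁ → 0` bounds `mu f Vt V₁ V₂` from above, in the limit, by
`2 * f 0 - 2 * f v + v * L - M`, where `deriv f v = L / 2`.
-/

open scoped Topology

section Convex

variable {f : ℝ → ℝ}

lemma add_deriv_mul_sub_le_of_convexOn (hf : ConvexOn ℝ univ f) {x : ℝ}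
    (hd : DifferentiableAt ℝ f x) (y : ℝ) : f x + deriv f x * (y - x) ≤ f y := by
  rcases lt_trichotomy x y with hxy | rfl | hyx
  · have h := hf.deriv_le_slope (mem_univ x) (mem_univ y) hxy hd
    rw [slope_def_field, le_div_iff₀ (sub_pos.2 hxy)] at h
    linarith
  · simp
  · have h := hf.slope_le_deriv (mem_univ y) (mem_univ x) hyx hd
    rw [slope_def_field, div_le_iff₀ (sub_pos.2 hyx)] at h
    linarith

lemma sum_translates_le_of_sum_deriv_eq_zero (hf : ConvexOn ℝ univ f) (hd : Differentiable ℝ f)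
    {ι : Type*} {s : Finset ι} {a : ι → ℝ} {x : ℝ} (hx : ∑ i ∈ s, deriv f (x + a i) = 0) (y : ℝ) :
    ∑ i ∈ s, f (x + a i) ≤ ∑ i ∈ s, f (y + a i) := by
  calc ∑ i ∈ s, f (x + a i)
      = ∑ i ∈ s, (f (x + a i) + deriv f (x + a i) * (y + a i - (x + a i))) := by
        simp only [add_sub_add_right_eq_sub, Finset.sum_add_distrib, ← Finset.sum_mul, hx,
          zero_mul, add_zero]
    _ ≤ ∑ i ∈ s, f (y + a i) :=
        Finset.sum_le_sum fun i _ ↦ add_deriv_mul_sub_le_of_convexOn hf (hd _) _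

lemma le_mu_of_sum_deriv_eq_zero (hf : ConvexOn ℝ univ f) (hd : Differentiable ℝ f)
    {Vt : ℝ → ℝ → ℝ} {V₁ V₂ : ℝ}
    (hVt : deriv f (Vt V₁ V₂) + deriv f (Vt V₁ V₂ + V₁) + deriv f (Vt V₁ V₂ + V₁ + V₂) = 0)
    (y : ℝ) :
    2 * f (V₁ / 2) + 2 * f ((V₁ + V₂) / 2) - f y - f (y + V₁) - f (y + V₁ + V₂)
      ≤ mu f Vt V₁ V₂ := by
  have h := sum_translates_le_of_sum_deriv_eq_zero hf hd (s := Finset.univ)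
    (a := ![0, V₁, V₁ + V₂]) (x := Vt V₁ V₂)
    (by simpa [Fin.sum_univ_three, ← add_assoc] using hVt) y
  simp only [Fin.sum_univ_three, Matrix.cons_val, add_zero, ← add_assoc] at h
  unfold mu
  linarith

end Convex

/-- The line `V ↦ L * V - M` is an asymptote of `f` at `+∞`. The intercept is written `-M` so that
`M` is the limit of `f (2 * V) - 2 * f V`. -/
def HasAsymptote (f : ℝ → ℝ) (L M : ℝ) : Prop :=
  Tendsto (fun V ↦ f V - L * V) atTop (𝓝 (-M))

namespace HasAsymptote

variable {f : ℝ → ℝ} {L M : ℝ}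

lemma tendsto_two_mul_sub (h : HasAsymptote f L M) :
    Tendsto (fun V ↦ f (2 * V) - 2 * f V) atTop (𝓝 M) := by
  have h2 : Tendsto (fun V : ℝ ↦ 2 * V) atTop atTop := tendsto_id.const_mul_atTop two_pos
  convert (h.comp h2).sub (h.const_mul 2) using 2
  · simp only [Function.comp_apply]
    ring
  · ring

lemma tendsto_add_sub (h : HasAsymptote f L M) (c : ℝ) :
    Tendsto (fun V ↦ f (V + c) - f V) atTop (𝓝 (L * c)) := by
  convert ((h.comp (tendsto_atTop_add_const_right _ c tendsto_id)).sub h).add_const (L * c) using 2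
  · simp only [Function.comp_apply, id_eq]
    ring
  · ring

lemma tendsto_deriv (h : HasAsymptote f L M) (hf : ConvexOn ℝ univ f) (hd : Differentiable ℝ f) :
    Tendsto (deriv f) atTop (𝓝 L) := by
  have hlower : Tendsto (fun V ↦ -(f (V + -1) - f V)) atTop (𝓝 L) := by
    simpa using (h.tendsto_add_sub (-1)).neg
  have hupper : Tendsto (fun V ↦ f (V + 1) - f V) atTop (𝓝 L) := by
    simpa using h.tendsto_add_sub 1
  refine tendsto_of_tendsto_of_tendsto_of_le_of_le hlower hupper (fun V ↦ ?_) (fun V ↦ ?_)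
  · linarith [add_deriv_mul_sub_le_of_convexOn hf (hd V) (V + -1)]
  · linarith [add_deriv_mul_sub_le_of_convexOn hf (hd V) (V + 1)]

lemma deriv_le (h : HasAsymptote f L M) (hf : ConvexOn ℝ univ f) (hd : Differentiable ℝ f)
    (V : ℝ) : deriv f V ≤ L :=
  (monotoneOn_univ.1 (hf.monotoneOn_deriv fun x _ ↦ hd x)).ge_of_tendsto
    (h.tendsto_deriv hf hd) V

lemma antitone_sub (h : HasAsymptote f L M) (hf : ConvexOn ℝ univ f) (hd : Differentiable ℝ f) :
    Antitone fun V ↦ f V - L * V := by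
  intro x y hxy
  have htangent := add_deriv_mul_sub_le_of_convexOn hf (hd y) x
  have hslope := mul_le_mul_of_nonneg_right (h.deriv_le hf hd y) (sub_nonneg.2 hxy)
  dsimp only
  linarith

lemma mul_sub_le (h : HasAsymptote f L M) (hf : ConvexOn ℝ univ f) (hd : Differentiable ℝ f)
    (V : ℝ) : L * V - M ≤ f V := by
  linarith [(h.antitone_sub hf hd).le_of_tendsto h V]

lemma le_mul_add (h : HasAsymptote f L M) (hf : ConvexOn ℝ univ f) (hd : Differentiable ℝ f)
    {V : ℝ} (hV : 0 ≤ V) : f V ≤ L * V + f 0 := by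
  linarith [h.antitone_sub hf hd hV]

lemma le_mu (h : HasAsymptote f L M) (hf : ConvexOn ℝ univ f) (hd : Differentiable ℝ f)
    (heven : Function.Even f) {Vt : ℝ → ℝ → ℝ} {V₁ V₂ : ℝ} (hV₁ : 0 ≤ V₁) (hV₂ : 0 ≤ V₂)
    (hVt : deriv f (Vt V₁ V₂) + deriv f (Vt V₁ V₂ + V₁) + deriv f (Vt V₁ V₂ + V₁ + V₂) = 0) :
    L * V₁ - (4 * M + 3 * f 0) ≤ mu f Vt V₁ V₂ := by
  have hmin := le_mu_of_sum_deriv_eq_zero hf hd hVt (-V₁)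
  rw [heven, neg_add_cancel, zero_add] at hmin
  linarith [h.mul_sub_le hf hd (V₁ / 2), h.mul_sub_le hf hd ((V₁ + V₂) / 2),
    h.le_mul_add hf hd hV₁, h.le_mul_add hf hd hV₂]

theorem bddAbove_setOf_mu_neg (h : HasAsymptote f L M) (hL : 0 < L) (hf : ConvexOn ℝ univ f)
    (hd : Differentiable ℝ f) (heven : Function.Even f) {Vt : ℝ → ℝ → ℝ}
    (hVt : ∀ V₁ V₂ : ℝ, 0 < V₁ → 0 < V₂ →
      deriv f (Vt V₁ V₂) + deriv f (Vt V₁ V₂ + V₁) + deriv f (Vt V₁ V₂ + V₁ + V₂) = 0) :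
    BddAbove {V₁ : ℝ | 0 < V₁ ∧ ∃ V₂ : ℝ, V₁ ≤ V₂ ∧ mu f Vt V₁ V₂ < 0} := by
  refine ⟨(4 * M + 3 * f 0) / L, ?_⟩
  rintro V₁ ⟨hV₁, V₂, hV₁₂, hmu⟩
  have hV₂ : 0 < V₂ := hV₁.trans_le hV₁₂
  rw [le_div_iff₀' hL]
  linarith [h.le_mu hf hd heven hV₁.le hV₂.le (hVt V₁ V₂ hV₁ hV₂)]

lemma le_sum_translates (h : HasAsymptote f L M) (hf : ConvexOn ℝ univ f)
    (hd : Differentiable ℝ f) (heven : Function.Even f) {v : ℝ} (hv : deriv f v = L / 2)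
    (x V₁ V₂ : ℝ) :
    2 * f v - v * L + L * (V₁ / 2 + V₂) - M ≤ f x + f (x + V₁) + f (x + V₁ + V₂) := by
  have htangent (y : ℝ) : f v - L / 2 * (y + v) ≤ f y := by
    have hle := add_deriv_mul_sub_le_of_convexOn hf (hd v) (-y)
    rw [heven, hv] at hle
    linarith
  linarith [htangent x, htangent (x + V₁), h.mul_sub_le hf hd (x + V₁ + V₂)]

theorem nonempty_setOf_mu_neg (h : HasAsymptote f L M) (hf : ConvexOn ℝ univ f)
    (hd : Differentiable ℝ f) (heven : Function.Even f) {v : ℝ} (hv : deriv f v = L / 2)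
    (hneg : 2 * f 0 - 2 * f v + v * L - M < 0) (Vt : ℝ → ℝ → ℝ) :
    {V₁ : ℝ | 0 < V₁ ∧ ∃ V₂ : ℝ, V₁ ≤ V₂ ∧ mu f Vt V₁ V₂ < 0}.Nonempty := by
  -- The limit, as `V₂ → ∞`, of the upper bound for `mu f Vt V₁ V₂` given by `le_sum_translates`.
  let bound (V₁ : ℝ) : ℝ := 2 * f (V₁ / 2) + L * V₁ / 2 - 2 * f v + v * L - M
  obtain ⟨V₁, hbound, hV₁⟩ : ∃ V₁, bound V₁ < 0 ∧ 0 < V₁ := by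
    have hcont : Continuous bound := by
      have := hd.continuous
      fun_prop
    have hbound_zero : bound 0 < 0 := by simpa [bound] using hneg
    have hev : ∀ᶠ V₁ in 𝓝[>] 0, bound V₁ < 0 :=
      (hcont.tendsto 0).mono_left nhdsWithin_le_nhds |>.eventually_lt_const hbound_zero
    exact (hev.and self_mem_nhdsWithin).exists
  have hmid : Tendsto (fun V₂ : ℝ ↦ (V₁ + V₂) / 2) atTop atTop :=
    (tendsto_atTop_add_const_left _ V₁ tendsto_id).atTop_div_const two_pos
  have hlim := (((h.comp hmid).add_const M).const_mul 2).add_const (bound V₁)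
  simp only [neg_add_cancel, mul_zero, zero_add] at hlim
  obtain ⟨V₂, hlt, hV₁₂⟩ := ((hlim.eventually_lt_const hbound).and (eventually_ge_atTop V₁)).exists
  refine ⟨V₁, hV₁, V₂, hV₁₂, ?_⟩
  simp only [Function.comp_apply, bound] at hlt
  unfold mu
  linarith [h.le_sum_translates hf hd heven hv (Vt V₁ V₂) V₁ V₂]

end HasAsymptote

lemma fEx18_even : Function.Even fEx18 := fun x ↦ by simp [fEx18]

lemma fEx18_zero : fEx18 0 = 1 / 2 := by norm_num [fEx18]

lemma fEx18_pos (V : ℝ) : 0 < fEx18 V := by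
  have h : 1 ≤ √(V ^ 2 + 1) := Real.one_le_sqrt.2 (by linarith [sq_nonneg V])
  unfold fEx18
  linarith

lemma contDiff_fEx18 {n : WithTop ℕ∞} : ContDiff ℝ n fEx18 :=
  (ContDiff.sqrt (by fun_prop) fun V ↦ by positivity).sub contDiff_const

lemma differentiable_fEx18 : Differentiable ℝ fEx18 := contDiff_fEx18.differentiable_one

lemma deriv_fEx18 (V : ℝ) : deriv fEx18 V = V / √(V ^ 2 + 1) := by
  have hsq : HasDerivAt (fun V : ℝ ↦ V ^ 2 + 1) (2 * V) V := by
    simpa using (hasDerivAt_pow 2 V).add_const (1 : ℝ)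
  have h : HasDerivAt fEx18 (2 * V / (2 * √(V ^ 2 + 1))) V :=
    (hsq.sqrt (by positivity)).sub_const _
  rw [h.deriv, mul_div_mul_left _ _ two_ne_zero]

lemma strictMono_deriv_fEx18 : StrictMono (deriv fEx18) := by
  have h : deriv fEx18 = fun V ↦ sin (arctan V) := by
    ext V
    rw [deriv_fEx18, sin_arctan, add_comm]
  exact h ▸ sin_arctan_strictMono

lemma strictConvexOn_fEx18 : StrictConvexOn ℝ univ fEx18 :=
  strictMono_deriv_fEx18.strictConvexOn_univ_of_deriv differentiable_fEx18.continuous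

lemma tendsto_sqrt_sq_add_one_sub_atTop :
    Tendsto (fun V : ℝ ↦ √(V ^ 2 + 1) - V) atTop (𝓝 0) := by
  have hsum : Tendsto (fun V : ℝ ↦ √(V ^ 2 + 1) + V) atTop atTop :=
    tendsto_atTop_mono (fun V ↦ le_add_of_nonneg_left (sqrt_nonneg _)) tendsto_id
  refine hsum.inv_tendsto_atTop.congr fun V ↦ inv_eq_of_mul_eq_one_right ?_
  rw [← sq_sub_sq, sq_sqrt (by positivity), add_sub_cancel_left]

lemma hasAsymptote_fEx18 : HasAsymptote fEx18 1 (1 / 2) := by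
  have h := tendsto_sqrt_sq_add_one_sub_atTop.sub_const (1 / 2)
  rw [zero_sub] at h
  refine h.congr fun V ↦ ?_
  unfold fEx18
  ring

lemma sqrt_inv_sqrt_three_sq_add_one : √((1 / √3) ^ 2 + 1) = 2 / √3 := by
  rw [sqrt_eq_iff_mul_self_eq_of_pos (by positivity)]
  field_simp
  norm_num

lemma deriv_fEx18_inv_sqrt_three : deriv fEx18 (1 / √3) = 1 / 2 := by
  rw [deriv_fEx18, sqrt_inv_sqrt_three_sq_add_one, div_div_div_cancel_right₀ (by positivity)]

lemma fEx18_criterion_eq :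
    2 * fEx18 0 - 2 * fEx18 (1 / √3) + 1 / √3 * 1 - 1 / 2 = 3 / 2 - √3 := by
  have h : 3 / √3 = √3 := div_sqrt
  rw [fEx18_zero, fEx18, sqrt_inv_sqrt_three_sq_add_one]
  linear_combination -h

lemma three_halves_lt_sqrt_three : (3 / 2 : ℝ) < √3 := lt_sqrt_of_sq_lt (by norm_num)

/-- Let f(V) = √(V² + 1) − 1/2. Then f is even, positive, continuously
differentiable, and strictly convex; it satisfies L = lim_{V→∞} f'(V) = 1,
M = lim_{V→∞} (f(2V) − 2f(V)) = 1/2, the unique V̄ with f'(V̄) = 1/2 is V̄ = 1/√3,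
and 2f(0) − 2f(1/√3) + (1/√3)·1 − 1/2 = 3/2 − √3 < 0. Consequently, for this
density the set {V₁ > 0 : ∃ V₂ ≥ V₁, μ(V₁, V₂) < 0} is nonempty and bounded above,
i.e. the blowup time V₀ satisfies 0 < V₀ < ∞. -/
theorem stmt_18 :
    (∀ x, fEx18 (-x) = fEx18 x) ∧
    (∀ x, 0 < fEx18 x) ∧
    ContDiff ℝ 1 fEx18 ∧
    StrictConvexOn ℝ Set.univ fEx18 ∧
    Tendsto (deriv fEx18) atTop (nhds 1) ∧
    Tendsto (fun V : ℝ => fEx18 (2 * V) - 2 * fEx18 V) atTop (nhds (1 / 2)) ∧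
    (deriv fEx18 (1 / Real.sqrt 3) = 1 / 2 ∧
      ∀ V : ℝ, deriv fEx18 V = 1 / 2 → V = 1 / Real.sqrt 3) ∧
    (2 * fEx18 0 - 2 * fEx18 (1 / Real.sqrt 3) + (1 / Real.sqrt 3) * 1 - 1 / 2
        = 3 / 2 - Real.sqrt 3 ∧
      3 / 2 - Real.sqrt 3 < 0) ∧
    (∀ Vt : ℝ → ℝ → ℝ,
      (∀ V₁ V₂ : ℝ, 0 < V₁ → 0 < V₂ →
        deriv fEx18 (Vt V₁ V₂) + deriv fEx18 (Vt V₁ V₂ + V₁)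
          + deriv fEx18 (Vt V₁ V₂ + V₁ + V₂) = 0) →
      ({V₁ : ℝ | 0 < V₁ ∧ ∃ V₂ : ℝ, V₁ ≤ V₂ ∧ mu fEx18 Vt V₁ V₂ < 0}.Nonempty ∧
        BddAbove {V₁ : ℝ | 0 < V₁ ∧ ∃ V₂ : ℝ, V₁ ≤ V₂ ∧ mu fEx18 Vt V₁ V₂ < 0})) := by
  have hconvex := strictConvexOn_fEx18.convexOn
  have hcriterion : 3 / 2 - √3 < 0 := sub_neg.2 three_halves_lt_sqrt_three
  refine ⟨fEx18_even, fEx18_pos, contDiff_fEx18, strictConvexOn_fEx18,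
    hasAsymptote_fEx18.tendsto_deriv hconvex differentiable_fEx18,
    hasAsymptote_fEx18.tendsto_two_mul_sub,
    ⟨deriv_fEx18_inv_sqrt_three,
      fun V hV ↦ strictMono_deriv_fEx18.injective (hV.trans deriv_fEx18_inv_sqrt_three.symm)⟩,
    ⟨fEx18_criterion_eq, hcriterion⟩, fun Vt hVt ↦ ⟨?nonempty, ?bddAbove⟩⟩
  case nonempty =>
    exact hasAsymptote_fEx18.nonempty_setOf_mu_neg hconvex differentiable_fEx18 fEx18_even
      deriv_fEx18_inv_sqrt_three (fEx18_criterion_eq.trans_lt hcriterion) Vt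
  case bddAbove =>
    exact hasAsymptote_fEx18.bddAbove_setOf_mu_neg one_pos hconvex differentiable_fEx18
      fEx18_even hVt
end

section
/- The equilibrium point Ṽ(V₁, V₂) is strictly decreasing in each variable: for V₁, V₁', V₂, V₂' > 0, if V₁ < V₁' then Ṽ(V₁', V₂) < Ṽ(V₁, V₂), and if V₂ < V₂' then Ṽ(V₁, V₂') < Ṽ(V₁, V₂). -/
open Filter Set

/-! The equilibrium condition says that the derivative of `f` sums to zero over the endpoints of the
consecutive intervals. Enlarging a volume while moving the leftmost endpoint weakly to the right
moves every endpoint weakly to the right and at least one of them strictly, so this sum, being a sum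
of strictly increasing functions, strictly increases and cannot stay zero. -/

theorem lt_of_sum_comp_add_eq {ι α M : Type*} [Fintype ι]
    [AddCommMonoid α] [LinearOrder α] [IsOrderedCancelAddMonoid α]
    [AddCommMonoid M] [PartialOrder M] [IsOrderedCancelAddMonoid M]
    {g : α → M} (hg : StrictMono g) {v w : ι → α} (hvw : v < w) {x y : α}
    (hsum : ∑ i, g (x + v i) = ∑ i, g (y + w i)) : y < x := by
  by_contra! hxy
  obtain ⟨hle, i, hi⟩ := Pi.lt_def.1 hvw
  refine (Finset.sum_lt_sum (fun j _ ↦ ?_) ⟨i, Finset.mem_univ i, ?_⟩).ne hsum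
  · exact hg.monotone (add_le_add hxy (hle j))
  · exact hg (add_lt_add_of_le_of_lt hxy hi)

section PartialSum

variable {M : Type*} [AddCommMonoid M] [PartialOrder M] {n : ℕ}

theorem monotone_partialSum [IsOrderedAddMonoid M] :
    Monotone (Fin.partialSum : (Fin n → M) → Fin (n + 1) → M) := by
  intro V W hVW i
  induction i using Fin.induction with
  | zero => simp only [Fin.partialSum_zero, le_refl]
  | succ i ih =>
    rw [Fin.partialSum_succ, Fin.partialSum_succ]
    exact add_le_add ih (hVW i)

theorem strictMono_partialSum [IsOrderedCancelAddMonoid M] :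
    StrictMono (Fin.partialSum : (Fin n → M) → Fin (n + 1) → M) := by
  intro V W hVW
  obtain ⟨hle, i, hi⟩ := Pi.lt_def.1 hVW
  refine Pi.lt_def.2 ⟨monotone_partialSum hle, i.succ, ?_⟩
  rw [Fin.partialSum_succ, Fin.partialSum_succ]
  exact add_lt_add_of_le_of_lt (monotone_partialSum hle i.castSucc) hi

end PartialSum

/-- `x` is an equilibrium point of the chain of consecutive intervals with volumes `V` when the
derivative of the density `f` sums to zero over their endpoints, `x` being the leftmost one.
The `i`-th endpoint is `x` plus the sum of the first `i` volumes. -/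
def IsEquilibriumPoint {n : ℕ} (f : ℝ → ℝ) (V : Fin n → ℝ) (x : ℝ) : Prop :=
  ∑ i, deriv f (x + Fin.partialSum V i) = 0

theorem isEquilibriumPoint_pair_iff {f : ℝ → ℝ} {V₁ V₂ x : ℝ} :
    IsEquilibriumPoint f ![V₁, V₂] x ↔
      deriv f x + deriv f (x + V₁) + deriv f (x + V₁ + V₂) = 0 := by
  simp [IsEquilibriumPoint, Fin.sum_univ_three, Fin.partialSum, add_assoc]

theorem stmt_19_general {n : ℕ} {f : ℝ → ℝ} (hf_conv : StrictConvexOn ℝ univ f)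
    (hf_diff : Differentiable ℝ f) {V W : Fin n → ℝ} (hVW : V < W) {x y : ℝ}
    (hx : IsEquilibriumPoint f V x) (hy : IsEquilibriumPoint f W y) : y < x := by
  have deriv_strictMono : StrictMono (deriv f) :=
    strictMonoOn_univ.1 (hf_conv.strictMonoOn_deriv fun z _ ↦ hf_diff z)
  exact lt_of_sum_comp_add_eq deriv_strictMono (strictMono_partialSum hVW) (hx.trans hy.symm)

/-- The equilibrium point Ṽ(V₁, V₂) is strictly decreasing in each
variable: for V₁, V₁', V₂, V₂' > 0, if V₁ < V₁' then Ṽ(V₁', V₂) < Ṽ(V₁, V₂), and if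
V₂ < V₂' then Ṽ(V₁, V₂') < Ṽ(V₁, V₂). -/
theorem stmt_19 (f : ℝ → ℝ)
    (hf_even : ∀ x, f (-x) = f x)
    (hf_conv : StrictConvexOn ℝ Set.univ f)
    (hf_smooth : ContDiff ℝ 1 f)
    (hf_pos : ∀ x, 0 < f x)
    (Vt : ℝ → ℝ → ℝ)
    (hVt : ∀ V₁ V₂ : ℝ, 0 < V₁ → 0 < V₂ →
      deriv f (Vt V₁ V₂) + deriv f (Vt V₁ V₂ + V₁) + deriv f (Vt V₁ V₂ + V₁ + V₂) = 0) :
    (∀ V₁ V₁' V₂ : ℝ, 0 < V₁ → 0 < V₁' → 0 < V₂ → V₁ < V₁' →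
      Vt V₁' V₂ < Vt V₁ V₂) ∧
    (∀ V₁ V₂ V₂' : ℝ, 0 < V₁ → 0 < V₂ → 0 < V₂' → V₂ < V₂' →
      Vt V₁ V₂' < Vt V₁ V₂) := by
  have equilibrium {V₁ V₂ : ℝ} (h₁ : 0 < V₁) (h₂ : 0 < V₂) :
      IsEquilibriumPoint f ![V₁, V₂] (Vt V₁ V₂) :=
    isEquilibriumPoint_pair_iff.2 (hVt V₁ V₂ h₁ h₂)
  have hf_diff : Differentiable ℝ f := hf_smooth.differentiable one_ne_zero
  refine ⟨fun V₁ V₁' V₂ h₁ h₁' h₂ hlt ↦ ?_, fun V₁ V₂ V₂' h₁ h₂ h₂' hlt ↦ ?_⟩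
  · have hV : ![V₁, V₂] < ![V₁', V₂] := by simp [Pi.lt_def, Pi.le_def, hlt, hlt.le]
    exact stmt_19_general hf_conv hf_diff hV (equilibrium h₁ h₂) (equilibrium h₁' h₂)
  · have hV : ![V₁, V₂] < ![V₁, V₂'] := by simp [Pi.lt_def, Pi.le_def, hlt, hlt.le]
    exact stmt_19_general hf_conv hf_diff hV (equilibrium h₁ h₂) (equilibrium h₁ h₂')
end
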